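/- arXiv:2502.11727 — 6 statements merged into one kernel-verified Lean document; each statement's English description precedes it below -/
import Mathlib

section
/- Let (Ω, F, P) be a probability space, let Y and M be real-valued random variables, and let V be an identification function. Fix ε > 0 and ε' > 0. Assume: (a) for every η ∈ ℝ and every c ∈ (−ε, ε), the random variable (𝟙{η ≤ M} − 𝟙{η ≤ M + c})·V(η, Y) is integrable and E[(𝟙{η ≤ M} − 𝟙{η ≤ M + c})·V(η, Y)] ≤ 0 (i.e., M is optimal among its vertical shifts M + c under every elementary loss S_η); (b) V(M − ε', Y) and V(M + ε', Y) are integrable. Then E[V(M, Y) | σ(M)] ≤ 0 almost surely. -/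
open MeasureTheory

/-!
Write `⌊M⌋_δ = δ * ⌊M / δ⌋` for the rounding of `M` down to the grid `δℤ`
(`gridFloor`). For the shift `c = -δ` and
the threshold `η = kδ`, optimality says `E[1{⌊M⌋_δ = kδ} V(kδ, Y)] ≤ 0`. Summing over any set of grid
points gives `E[1{⌊M⌋_δ ∈ A} V(⌊M⌋_δ, Y)] ≤ 0` for every Borel set `A`
(`integral_gridFloor_nonpos`).

For a closed set `K`, let `A` be the closed `δ`-thickening of `K` and let `δ → 0`. Since `⌊M⌋_δ`
lies in `(M - δ, M]`, left-continuity gives `V(⌊M⌋_δ, Y) → V(M, Y)`, while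
the indicators converge to `1{M ∈ K}` because `K` is closed. Monotonicity of `V` bounds
everything by `V(M ± ε', Y)`, so dominated convergence yields `E[1{M ∈ K} V(M, Y)] ≤ 0`
(`setIntegral_closed_nonpos`).

Finally, the event that the conditional expectation is positive has the form `{M ∈ B}` with `B`
Borel; if it had positive probability, inner regularity of the law of `M` would give a closed
`K ⊆ B` of positive mass, on which the integral of `V(M, Y)` would be positive.
-/

/-- The largest point of the grid `δℤ` that is at most `x` (for `δ > 0`). -/
noncomputable def gridFloor (δ x : ℝ) : ℝ := δ * (⌊x / δ⌋ : ℝ)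

lemma gridFloor_le {δ : ℝ} (hδ : 0 < δ) (x : ℝ) : gridFloor δ x ≤ x := by
  have h := Int.floor_le (x / δ)
  rw [le_div_iff₀ hδ] at h
  unfold gridFloor
  linarith

lemma lt_gridFloor_add {δ : ℝ} (hδ : 0 < δ) (x : ℝ) : x < gridFloor δ x + δ := by
  have h := Int.lt_floor_add_one (x / δ)
  rw [div_lt_iff₀ hδ] at h
  unfold gridFloor
  linarith

lemma measurable_gridFloor (δ : ℝ) : Measurable (gridFloor δ) := by
  unfold gridFloor
  have h : Measurable (fun x : ℝ => ⌊x / δ⌋) := Int.measurable_floor.comp (measurable_id.div_const δ)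
  exact ((measurable_of_countable (fun k : ℤ => (k : ℝ))).comp h).const_mul δ

section

variable {ε' : ℝ} {Ω : Type*} [MeasurableSpace Ω] {P : Measure Ω} {Y M : Ω → ℝ} {V : ℝ → ℝ → ℝ}

/-- Monotonicity of `V` sandwiches `V(n, y)` between `V(m - ε', y)` and `V(m + ε', y)`; this is the
source of the dominating function. -/
lemma norm_le_of_near (hVmono : ∀ y : ℝ, Monotone (fun z => V z y)) {m n y : ℝ}
    (h1 : m - ε' ≤ n) (h2 : n ≤ m + ε') :
    ‖V n y‖ ≤ ‖V (m - ε') y‖ + ‖V (m + ε') y‖ := by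
  have a : V (m - ε') y ≤ V n y := hVmono y h1
  have b : V n y ≤ V (m + ε') y := hVmono y h2
  simp only [Real.norm_eq_abs]
  have := neg_abs_le (V (m - ε') y)
  have := le_abs_self (V (m + ε') y)
  have := abs_nonneg (V (m - ε') y)
  have := abs_nonneg (V (m + ε') y)
  rw [abs_le]
  constructor <;> linarith

lemma integrable_of_near (hY : Measurable Y) (hVmeas : Measurable (Function.uncurry V))
    (hVmono : ∀ y : ℝ, Monotone (fun z => V z y))
    (hb_minus : Integrable (fun ω => V (M ω - ε') (Y ω)) P)
    (hb_plus : Integrable (fun ω => V (M ω + ε') (Y ω)) P)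
    {N : Ω → ℝ} (hN : Measurable N) (h1 : ∀ ω, M ω - ε' ≤ N ω) (h2 : ∀ ω, N ω ≤ M ω + ε') :
    Integrable (fun ω => V (N ω) (Y ω)) P :=
  (hb_minus.norm.add hb_plus.norm).mono' (hVmeas.comp (hN.prodMk hY)).aestronglyMeasurable
    (Filter.Eventually.of_forall fun ω => norm_le_of_near hVmono (h1 ω) (h2 ω))

/-- The hypothesis `hcell` is optimality against a shift by `-δ`, with the difference of indicators
written as the indicator of the cell `η ≤ M < η + δ`. -/
lemma integral_gridFloor_nonpos (hM : Measurable M) {δ : ℝ} (hδ : 0 < δ)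
    (hcell : ∀ η : ℝ, ∫ ω in {ω | η ≤ M ω ∧ M ω < η + δ}, V η (Y ω) ∂P ≤ 0)
    (hint : Integrable (fun ω => V (gridFloor δ (M ω)) (Y ω)) P)
    {A : Set ℝ} (hA : MeasurableSet A) :
    ∫ ω in {ω | gridFloor δ (M ω) ∈ A}, V (gridFloor δ (M ω)) (Y ω) ∂P ≤ 0 := by
  classical
  have hgm : Measurable (fun ω => gridFloor δ (M ω)) := (measurable_gridFloor δ).comp hM
  have hfm : Measurable (fun ω => ⌊M ω / δ⌋) := Int.measurable_floor.comp (hM.div_const δ)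
  set T : ℤ → Set Ω := fun k => {ω | gridFloor δ (M ω) ∈ A} ∩ (fun ω => ⌊M ω / δ⌋) ⁻¹' {k} with hT
  have hTU : {ω | gridFloor δ (M ω) ∈ A} = ⋃ k, T k := by
    ext ω; simp [hT]
  have hTm : ∀ k, MeasurableSet (T k) := fun k =>
    (hgm hA).inter (hfm (measurableSet_singleton k))
  have hTd : Pairwise (Function.onFun Disjoint T) := by
    intro i j hij
    refine Set.disjoint_left.2 fun ω hi hj => hij ?_
    exact hi.2.symm.trans hj.2
  rw [hTU, integral_iUnion hTm hTd hint.integrableOn]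
  refine tsum_nonpos fun k => ?_
  have hval : ∀ ω ∈ T k, gridFloor δ (M ω) = δ * k := by
    intro ω hω
    have : ⌊M ω / δ⌋ = k := hω.2
    simp [gridFloor, this]
  rw [setIntegral_congr_fun (hTm k) (g := fun ω => V (δ * k) (Y ω))
    (fun ω hω => by simp only [hval ω hω])]
  by_cases hk : δ * (k : ℝ) ∈ A
  · have : T k = {ω | δ * (k : ℝ) ≤ M ω ∧ M ω < δ * k + δ} := by
      ext ω
      constructor
      · intro hω
        have h1 := gridFloor_le hδ (M ω)
        have h2 := lt_gridFloor_add hδ (M ω)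
        rw [hval ω hω] at h1 h2
        exact ⟨h1, h2⟩
      · rintro ⟨h1, h2⟩
        have hf : ⌊M ω / δ⌋ = k := by
          rw [Int.floor_eq_iff, le_div_iff₀ hδ, div_lt_iff₀ hδ]
          constructor <;> linarith
        refine ⟨?_, hf⟩
        simpa [gridFloor, hf] using hk
    rw [this]
    exact hcell _
  · have : T k = ∅ := by
      ext ω
      simp only [Set.mem_empty_iff_false, iff_false]
      intro hω
      have h := hω.1
      rw [Set.mem_ofPred_eq, hval ω hω] at h
      exact hk h
    simp [this]

lemma setIntegral_closed_nonpos (hY : Measurable Y) (hM : Measurable M)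
    (hVmeas : Measurable (Function.uncurry V))
    (hVmono : ∀ y : ℝ, Monotone (fun z => V z y))
    (hVlc : ∀ y z : ℝ, ContinuousWithinAt (fun z => V z y) (Set.Iic z) z)
    {ε : ℝ} (hε : 0 < ε) (hε' : 0 < ε')
    (hcell : ∀ δ : ℝ, 0 < δ → δ < ε →
      ∀ η : ℝ, ∫ ω in {ω | η ≤ M ω ∧ M ω < η + δ}, V η (Y ω) ∂P ≤ 0)
    (hb_minus : Integrable (fun ω => V (M ω - ε') (Y ω)) P)
    (hb_plus : Integrable (fun ω => V (M ω + ε') (Y ω)) P)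
    {K : Set ℝ} (hK : IsClosed K) :
    ∫ ω in M ⁻¹' K, V (M ω) (Y ω) ∂P ≤ 0 := by
  -- mesh sizes below both `ε` and `ε'`, tending to `0`
  obtain ⟨δ, -, hδpos, hδlim⟩ := exists_seq_strictAnti_tendsto' (lt_min hε hε')
  have hδ0 : ∀ n, 0 < δ n := fun n => (hδpos n).1
  have hδε : ∀ n, δ n < ε := fun n => (hδpos n).2.trans_le (min_le_left _ _)
  have hδε' : ∀ n, δ n < ε' := fun n => (hδpos n).2.trans_le (min_le_right _ _)
  have hgm : ∀ n, Measurable (fun ω => gridFloor (δ n) (M ω)) := fun n =>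
    (measurable_gridFloor _).comp hM
  have hlow : ∀ n ω, M ω - ε' ≤ gridFloor (δ n) (M ω) := fun n ω => by
    linarith [lt_gridFloor_add (hδ0 n) (M ω), hδε' n]
  have hupp : ∀ n ω, gridFloor (δ n) (M ω) ≤ M ω + ε' := fun n ω => by
    linarith [gridFloor_le (hδ0 n) (M ω)]
  have hglim : ∀ ω, Filter.Tendsto (fun n => gridFloor (δ n) (M ω)) Filter.atTop
      (nhds (M ω)) := fun ω => by
    refine tendsto_of_tendsto_of_tendsto_of_le_of_le (g := fun n => M ω - δ n)
      (h := fun _ => M ω) ?_ tendsto_const_nhds ?_ ?_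
    · simpa using tendsto_const_nhds.sub hδlim
    · exact fun n => by
        have := lt_gridFloor_add (hδ0 n) (M ω)
        simp only
        linarith
    · exact fun n => gridFloor_le (hδ0 n) (M ω)
  let S : ℕ → Set Ω := fun n => {ω | gridFloor (δ n) (M ω) ∈ Metric.cthickening (δ n) K}
  have hSm : ∀ n, MeasurableSet (S n) := fun n =>
    hgm n Metric.isClosed_cthickening.measurableSet
  have hnonpos : ∀ n, ∫ ω, (S n).indicator
      (fun ω => V (gridFloor (δ n) (M ω)) (Y ω)) ω ∂P ≤ 0 := fun n => by
    rw [integral_indicator (hSm n)]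
    exact integral_gridFloor_nonpos hM (hδ0 n) (hcell _ (hδ0 n) (hδε n))
      (integrable_of_near hY hVmeas hVmono hb_minus hb_plus (hgm n) (hlow n) (hupp n))
      Metric.isClosed_cthickening.measurableSet
  rw [← integral_indicator (hM hK.measurableSet)]
  refine le_of_tendsto' (tendsto_integral_of_dominated_convergence
    (fun ω => ‖V (M ω - ε') (Y ω)‖ + ‖V (M ω + ε') (Y ω)‖) ?_
    (hb_minus.norm.add hb_plus.norm) ?_ ?_) hnonpos
  · exact fun n => ((hVmeas.comp ((hgm n).prodMk hY)).indicator (hSm n)).aestronglyMeasurable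
  · exact fun n => Filter.Eventually.of_forall fun ω =>
      (norm_indicator_le_norm_self _ _).trans (norm_le_of_near hVmono (hlow n ω) (hupp n ω))
  refine Filter.Eventually.of_forall fun ω => ?_
  by_cases hω : M ω ∈ K
  · have hS : ∀ n, ω ∈ S n := fun n => by
      refine Metric.mem_cthickening_of_dist_le _ (M ω) _ _ hω ?_
      rw [Real.dist_eq, abs_le]
      constructor <;> linarith [gridFloor_le (hδ0 n) (M ω), lt_gridFloor_add (hδ0 n) (M ω), hδ0 n]
    have hω' : ω ∈ M ⁻¹' K := hω
    simp only [Set.indicator_of_mem (hS _), Set.indicator_of_mem hω']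
    exact (hVlc (Y ω) (M ω)).tendsto.comp (tendsto_nhdsWithin_iff.2
      ⟨hglim ω, Filter.Eventually.of_forall fun n => gridFloor_le (hδ0 n) (M ω)⟩)
  · -- a fixed `r`-thickening misses `M ω`; its closedness keeps nearby points out as well
    obtain ⟨r, hr, hωr⟩ : ∃ r, 0 < r ∧ M ω ∉ Metric.cthickening r K := by
      by_contra! h
      apply hω
      rw [← hK.closure_eq, Metric.closure_eq_iInter_cthickening]
      simpa using h
    have hev : ∀ᶠ n in Filter.atTop, ω ∉ S n := by
      filter_upwards [(hglim ω).eventually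
        (Metric.isClosed_cthickening.isOpen_compl.mem_nhds hωr),
        hδlim.eventually (gt_mem_nhds hr)] with n h1 h2 h3
      exact h1 (Metric.cthickening_mono h2.le K h3)
    have hω' : ω ∉ M ⁻¹' K := hω
    rw [Set.indicator_of_notMem hω']
    refine tendsto_const_nhds.congr' ?_
    filter_upwards [hev] with n hn
    rw [Set.indicator_of_notMem hn]

end

/-- **Theorem 1 of the paper, first conclusion.**
If the model prediction `M` is optimal among all its vertical shifts `M + c`,
`c ∈ (-ε, ε)`, under every elementary loss `S_η` associated with the
identification function `V`, and the integrability condition (b) holds, then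
`E[V(M, Y) | σ(M)] ≤ 0` almost surely. -/
theorem t_calibration_from_below
    {Ω : Type*} [MeasurableSpace Ω] (P : Measure Ω) [IsProbabilityMeasure P]
    (Y M : Ω → ℝ) (hY : Measurable Y) (hM : Measurable M)
    (V : ℝ → ℝ → ℝ)
    (hVmeas : Measurable (Function.uncurry V))
    (hVmono : ∀ y : ℝ, Monotone (fun z => V z y))
    (hVlc : ∀ y z : ℝ, ContinuousWithinAt (fun z => V z y) (Set.Iic z) z)
    (ε ε' : ℝ) (hε : 0 < ε) (hε' : 0 < ε')
    -- (a): optimality of `M` among its vertical shifts under every elementary loss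
    (ha_int : ∀ (η : ℝ), ∀ c ∈ Set.Ioo (-ε) ε,
      Integrable (fun ω =>
        ((if η ≤ M ω then (1:ℝ) else 0) - (if η ≤ M ω + c then (1:ℝ) else 0)) * V η (Y ω)) P)
    (ha_opt : ∀ (η : ℝ), ∀ c ∈ Set.Ioo (-ε) ε,
      ∫ ω, ((if η ≤ M ω then (1:ℝ) else 0) - (if η ≤ M ω + c then (1:ℝ) else 0)) * V η (Y ω) ∂P
        ≤ 0)
    -- (b): integrability of `V(M ± ε', Y)`
    (hb_minus : Integrable (fun ω => V (M ω - ε') (Y ω)) P)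
    (hb_plus : Integrable (fun ω => V (M ω + ε') (Y ω)) P) :
    ∀ᵐ ω ∂P,
      (P[(fun ω => V (M ω) (Y ω)) | MeasurableSpace.comap M inferInstance]) ω ≤ 0 := by
  have hcell : ∀ δ : ℝ, 0 < δ → δ < ε →
      ∀ η : ℝ, ∫ ω in {ω | η ≤ M ω ∧ M ω < η + δ}, V η (Y ω) ∂P ≤ 0 := by
    intro δ h0 h1 η
    have hmeas : MeasurableSet {ω | η ≤ M ω ∧ M ω < η + δ} :=
      (measurableSet_le measurable_const hM).inter (measurableSet_lt hM measurable_const)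
    rw [← integral_indicator hmeas]
    convert ha_opt η (-δ) ⟨by linarith, by linarith⟩ using 3 with ω
    by_cases h2 : η ≤ M ω <;> by_cases h3 : M ω < η + δ
    · have h4 : ¬ η ≤ M ω + -δ := by linarith
      simp [Set.indicator, h2, h3, h4]
    · have h4 : η ≤ M ω + -δ := by linarith
      simp [Set.indicator, h2, h3, h4]
    · have h4 : ¬ η ≤ M ω + -δ := by linarith
      simp [Set.indicator, h2, h4]
    · linarith
  have hclosed : ∀ K : Set ℝ, IsClosed K → ∫ ω in M ⁻¹' K, V (M ω) (Y ω) ∂P ≤ 0 := fun K hK =>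
    setIntegral_closed_nonpos hY hM hVmeas hVmono hVlc hε hε' hcell hb_minus hb_plus hK
  have hint : Integrable (fun ω => V (M ω) (Y ω)) P :=
    integrable_of_near hY hVmeas hVmono hb_minus hb_plus hM
      (fun ω => by linarith) (fun ω => by linarith)
  have hle := hM.comap_le
  set W := P[(fun ω => V (M ω) (Y ω)) | MeasurableSpace.comap M inferInstance] with hW
  have hWm : Measurable[MeasurableSpace.comap M inferInstance] W :=
    stronglyMeasurable_condExp.measurable
  obtain ⟨B, hB, hBW⟩ := hWm (measurableSet_Ioi (a := (0 : ℝ)))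
  have hset : {ω | ¬ W ω ≤ 0} = M ⁻¹' B := by
    rw [hBW]; ext ω; simp
  rw [ae_iff, hset]
  by_contra hne
  have := Measure.isProbabilityMeasure_map (μ := P) hM.aemeasurable
  have hpos : 0 < (P.map M) B := by
    rw [Measure.map_apply hM hB]; exact pos_iff_ne_zero.2 hne
  obtain ⟨K, hKB, hK, hKpos⟩ := hB.exists_lt_isClosed_of_ne_top (measure_ne_top _ _) hpos
  rw [Measure.map_apply hM hK.measurableSet] at hKpos
  have hWpos : ∀ ω ∈ M ⁻¹' K, 0 < W ω := fun ω hω => by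
    have : ω ∈ W ⁻¹' Set.Ioi 0 := hBW ▸ hKB hω
    exact this
  have hKm := hM hK.measurableSet
  have h1 : ∫ ω in M ⁻¹' K, W ω ∂P = ∫ ω in M ⁻¹' K, V (M ω) (Y ω) ∂P :=
    setIntegral_condExp hle hint ⟨K, hK.measurableSet, rfl⟩
  have h2 : 0 < ∫ ω in M ⁻¹' K, W ω ∂P := by
    rw [setIntegral_pos_iff_support_of_nonneg_ae
      ((ae_restrict_iff' hKm).2 (Filter.Eventually.of_forall fun ω hω => (hWpos ω hω).le))
      integrable_condExp.integrableOn]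
    have hsub : M ⁻¹' K ⊆ Function.support W := fun ω hω =>
      Function.mem_support.2 (hWpos ω hω).ne'
    rwa [Set.inter_eq_right.2 hsub]
  linarith [hclosed K hK]
end

section
/- Let (Ω, F, P) be a probability space, let Y and M be real-valued random variables, and let V be an identification function. Fix ε > 0 and ε' > 0. Assume: (a) for every η ∈ ℝ and every c ∈ (−ε, ε), the random variable (𝟙{η ≤ M} − 𝟙{η ≤ M + c})·V(η, Y) is integrable and E[(𝟙{η ≤ M} − 𝟙{η ≤ M + c})·V(η, Y)] ≤ 0 (i.e., M is optimal among its vertical shifts M + c under every elementary loss S_η); (b) V(M − ε', Y) and V(M + ε', Y) are integrable. Then E[V(M+, Y) | σ(M)] ≥ 0 almost surely, where V(M+, Y)(ω) := lim_{h↓0} V(M(ω) + h, Y(ω)). -/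
/-!
For `0 < c < ε`, optimality against the shift `M + c` under `S_η` says
`E[𝟙{η - c ≤ M < η} V(η, Y)] ≥ 0`. Adding these inequalities over a grid of mesh `c` gives
`E[𝟙{M ∈ I} V(η_c, Y)] ≥ 0`, where `η_c ∈ (M, M + c]` is the grid point following `M` and `I` is a
union of consecutive grid cells (`grid_sum_eq` is the pointwise identity behind this). Letting
`c → 0`, with `|V(M - ε', Y)| + |V(M + ε', Y)|` as a dominating function, yields
`E[𝟙{a ≤ M ≤ b} V(M+, Y)] ≥ 0` for all `a < b` (`tendsto_grid_sum` is the pointwise convergence).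

Writing `E[V(M+, Y) | σ(M)] = g(M)`, the function `g` has nonnegative integral over every closed
interval with respect to the law of `M`, so `g ≥ 0` almost everywhere for that law by the Lebesgue
differentiation theorem for Besicovitch balls (`ae_nonneg_of_setIntegral_closedBall_nonneg`).
-/

open MeasureTheory

open Filter Topology in
/-- A consequence of Lebesgue differentiation, valid for any finite measure on the line: it suffices
to test nonnegativity of a function on closed balls. -/
lemma ae_nonneg_of_setIntegral_closedBall_nonneg (μ : Measure ℝ) [IsFiniteMeasure μ] (g : ℝ → ℝ)
    (hg : Integrable g μ)
    (h : ∀ x r : ℝ, 0 < r → 0 ≤ ∫ y in Metric.closedBall x r, g y ∂μ) :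
    ∀ᵐ x ∂μ, 0 ≤ g x := by
  filter_upwards [(Besicovitch.vitaliFamily μ).ae_tendsto_average hg.locallyIntegrable] with x hx
  refine ge_of_tendsto (hx.comp (Besicovitch.tendsto_filterAt μ x)) ?_
  filter_upwards [self_mem_nhdsWithin] with r hr
  simp only [Function.comp_apply, setAverage_eq]
  exact smul_nonneg (by positivity) (h x r hr)

/-- For a fixed value `m` of `M`, the sum of the loss differences for the shift `h`, over the
thresholds `a + h, …, a + N h`, has at most one nonzero term: the one whose threshold is the grid
point following `m`. -/
lemma grid_sum_eq (v : ℝ → ℝ) (m a h : ℝ) (hh : 0 < h) (N : ℕ) :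
    ∑ k ∈ Finset.range N, -(((if a + (k + 1) * h ≤ m then (1 : ℝ) else 0)
        - (if a + (k + 1) * h ≤ m + h then (1 : ℝ) else 0)) * v (a + (k + 1) * h))
      = if a ≤ m ∧ m < a + N * h then v (a + (⌊(m - a) / h⌋₊ + 1) * h) else 0 := by
  induction N with
  | zero =>
    rw [if_neg (by rintro ⟨h1, h2⟩; simp at h2; linarith)]
    simp
  | succ N ih =>
    rw [Finset.sum_range_succ, ih]
    have hN : 0 ≤ (N : ℝ) * h := by positivity
    push_cast
    by_cases h1 : a + (N + 1) * h ≤ m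
    · rw [if_neg (by rintro ⟨_, h2⟩; nlinarith), if_pos h1, if_pos (by linarith),
        if_neg (by rintro ⟨_, h2⟩; linarith)]
      simp
    · by_cases h2 : a + N * h ≤ m
      · have hfl : ⌊(m - a) / h⌋₊ = N := by
          rw [Nat.floor_eq_iff (div_nonneg (by linarith) hh.le), le_div_iff₀ hh, div_lt_iff₀ hh]
          constructor <;> linarith
        rw [if_neg (by rintro ⟨_, h3⟩; linarith), if_neg h1, if_pos (by linarith),
          if_pos ⟨by linarith, by linarith⟩, hfl]
        ring
      · rw [if_neg h1, if_neg (show ¬ a + (N + 1) * h ≤ m + h by intro h3; linarith)]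
        by_cases h3 : a ≤ m
        · rw [if_pos ⟨h3, by linarith⟩, if_pos ⟨h3, by linarith⟩]
          ring
        · rw [if_neg (fun h4 => h3 h4.1), if_neg (fun h4 => h3 h4.1)]
          ring

/-- The grid point following `m ≥ a` lies in `(m, m + h]`. -/
lemma next_grid_point_mem (m a h : ℝ) (hh : 0 < h) (ham : a ≤ m) :
    a + (⌊(m - a) / h⌋₊ + 1) * h ∈ Set.Ioc m (m + h) := by
  have h1 := Nat.floor_le (div_nonneg (sub_nonneg.2 ham) hh.le)
  have h2 := Nat.lt_floor_add_one ((m - a) / h)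
  rw [le_div_iff₀ hh] at h1
  rw [div_lt_iff₀ hh] at h2
  constructor <;> linarith

open Filter Topology in
lemma tendsto_mesh (a b : ℝ) : Tendsto (fun n : ℕ => (b - a) / ((n : ℝ) + 1)) atTop (𝓝 0) := by
  have := (tendsto_one_div_add_atTop_nhds_zero_nat (𝕜 := ℝ)).const_mul (b - a)
  simpa [div_eq_mul_inv] using this

open Filter Topology in
/-- With mesh `(b - a) / (n + 1)` and `n + 2` cells, the grid covers `[a, b]` and shrinks to it. -/
lemma tendsto_grid_sum (v : ℝ → ℝ) (hv : Monotone v) (m a b : ℝ) (hab : a < b) :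
    Tendsto (fun n : ℕ => if a ≤ m ∧ m < a + ((n + 2 : ℕ) : ℝ) * ((b - a) / ((n : ℝ) + 1))
        then v (a + (⌊(m - a) / ((b - a) / ((n : ℝ) + 1))⌋₊ + 1) * ((b - a) / ((n : ℝ) + 1))) else 0)
      atTop (𝓝 (if m ∈ Set.Icc a b then Function.rightLim v m else 0)) := by
  have hpos : ∀ n : ℕ, 0 < (b - a) / ((n : ℝ) + 1) := fun n =>
    div_pos (by linarith) (by positivity)
  have hend : ∀ n : ℕ, a + ((n + 2 : ℕ) : ℝ) * ((b - a) / ((n : ℝ) + 1))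
      = b + (b - a) / ((n : ℝ) + 1) := by
    intro n
    push_cast
    have : (n : ℝ) + 1 ≠ 0 := by positivity
    field_simp
    ring
  simp_rw [hend]
  by_cases ham : a ≤ m
  · by_cases hmb : m ≤ b
    · rw [if_pos ⟨ham, hmb⟩]
      have hif : ∀ n : ℕ, a ≤ m ∧ m < b + (b - a) / ((n : ℝ) + 1) := fun n =>
        ⟨ham, by linarith [hpos n]⟩
      refine Tendsto.congr (fun n => (if_pos (hif n)).symm) ?_
      refine (hv.tendsto_rightLim m).comp (tendsto_nhdsWithin_iff.2 ⟨?_, ?_⟩)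
      · refine tendsto_of_tendsto_of_tendsto_of_le_of_le tendsto_const_nhds
          (h := fun n : ℕ => m + (b - a) / ((n : ℝ) + 1)) ?_
          (fun n => (next_grid_point_mem m a _ (hpos n) ham).1.le)
          (fun n => (next_grid_point_mem m a _ (hpos n) ham).2)
        simpa using (tendsto_mesh a b).const_add m
      · exact Eventually.of_forall fun n => (next_grid_point_mem m a _ (hpos n) ham).1
    · rw [if_neg (fun h => hmb h.2)]
      refine tendsto_const_nhds.congr' ?_
      filter_upwards [(tendsto_mesh a b).eventually (gt_mem_nhds (show 0 < m - b by linarith))]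
        with n hn
      rw [if_neg (by rintro ⟨_, h⟩; linarith)]
  · simp [ham]

open Filter Topology in
/-- **Theorem 1 of the paper, second conclusion.**
If the model prediction `M` is optimal among all its vertical shifts `M + c`,
`c ∈ (-ε, ε)`, under every elementary loss `S_η` associated with the
identification function `V`, and the integrability condition (b) holds, then
 `E[V(M+, Y) | σ(M)] ≥ 0` almost surely. -/
theorem t_calibration_from_above
    {Ω : Type*} [MeasurableSpace Ω] (P : Measure Ω) [IsProbabilityMeasure P]
    (Y M : Ω → ℝ) (hY : Measurable Y) (hM : Measurable M)
    (V : ℝ → ℝ → ℝ)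
    (hVmeas : Measurable (Function.uncurry V))
    (hVmono : ∀ y : ℝ, Monotone (fun z => V z y))
    (hVlc : ∀ y z : ℝ, ContinuousWithinAt (fun z => V z y) (Set.Iic z) z)
    (ε ε' : ℝ) (hε : 0 < ε) (hε' : 0 < ε')
    -- (a): optimality of `M` among its vertical shifts under every elementary loss
    (ha_int : ∀ (η : ℝ), ∀ c ∈ Set.Ioo (-ε) ε,
      Integrable (fun ω =>
        ((if η ≤ M ω then (1:ℝ) else 0) - (if η ≤ M ω + c then (1:ℝ) else 0)) * V η (Y ω)) P)
    (ha_opt : ∀ (η : ℝ), ∀ c ∈ Set.Ioo (-ε) ε,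
      ∫ ω, ((if η ≤ M ω then (1:ℝ) else 0) - (if η ≤ M ω + c then (1:ℝ) else 0)) * V η (Y ω) ∂P
        ≤ 0)
    -- (b): integrability of `V(M ± ε', Y)`
    (hb_minus : Integrable (fun ω => V (M ω - ε') (Y ω)) P)
    (hb_plus : Integrable (fun ω => V (M ω + ε') (Y ω)) P) :
    ∀ᵐ ω ∂P,
       (P[(fun ω => Function.rightLim (fun z => V z (Y ω)) (M ω)) | MeasurableSpace.comap M inferInstance]) ω ≥ 0 := by
  classical
  set W : Ω → ℝ := fun ω => Function.rightLim (fun z => V z (Y ω)) (M ω) with hW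
  let D : Ω → ℝ := fun ω => |V (M ω - ε') (Y ω)| + |V (M ω + ε') (Y ω)|
  have hD : Integrable D P := hb_minus.abs.add hb_plus.abs
  have hbetween : ∀ ω t, V (M ω - ε') (Y ω) ≤ t → t ≤ V (M ω + ε') (Y ω) → ‖t‖ ≤ D ω := by
    intro ω t h1 h2
    rw [Real.norm_eq_abs]
    exact (abs_le_max_abs_abs h1 h2).trans
      (max_le_add_of_nonneg (abs_nonneg _) (abs_nonneg _))
  have hWmeas : Measurable W := by
    refine measurable_of_tendsto_metrizable
      (f := fun (n : ℕ) ω => V (M ω + 1 / ((n : ℝ) + 1)) (Y ω)) (fun n => ?_)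
      (tendsto_pi_nhds.2 fun ω => ?_)
    · exact hVmeas.comp ((hM.add_const _).prodMk hY)
    · refine ((hVmono (Y ω)).tendsto_rightLim (M ω)).comp (tendsto_nhdsWithin_iff.2 ⟨?_, ?_⟩)
      · simpa using (tendsto_one_div_add_atTop_nhds_zero_nat (𝕜 := ℝ)).const_add (M ω)
      · refine Eventually.of_forall fun n => ?_
        have : (0 : ℝ) < 1 / ((n : ℝ) + 1) := by positivity
        simpa using this
  have hWint : Integrable W P := by
    refine hD.mono' hWmeas.aestronglyMeasurable (Eventually.of_forall fun ω => ?_)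
    exact hbetween ω _ ((hVmono (Y ω)).le_rightLim (by linarith))
      ((hVmono (Y ω)).rightLim_le (by linarith))
  have hIcc : ∀ a b : ℝ, a < b → 0 ≤ ∫ ω in M ⁻¹' Set.Icc a b, W ω ∂P := by
    intro a b hab
    have hpos : ∀ n : ℕ, 0 < (b - a) / ((n : ℝ) + 1) := fun n =>
      div_pos (by linarith) (by positivity)
    let F : ℕ → Ω → ℝ := fun n ω => ∑ k ∈ Finset.range (n + 2),
      -(((if a + (k + 1) * ((b - a) / ((n : ℝ) + 1)) ≤ M ω then (1 : ℝ) else 0)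
        - (if a + (k + 1) * ((b - a) / ((n : ℝ) + 1)) ≤ M ω + (b - a) / ((n : ℝ) + 1)
            then (1 : ℝ) else 0)) * V (a + (k + 1) * ((b - a) / ((n : ℝ) + 1))) (Y ω))
    have hF : ∀ n ω, F n ω = _ := fun n ω =>
      grid_sum_eq (fun z => V z (Y ω)) (M ω) a _ (hpos n) (n + 2)
    have hsmall : ∀ δ : ℝ, 0 < δ → ∀ᶠ n : ℕ in atTop, (b - a) / ((n : ℝ) + 1) < δ := fun δ hδ =>
      (tendsto_mesh a b).eventually (gt_mem_nhds hδ)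
    have hFint : ∀ᶠ n in atTop, Integrable (F n) P := by
      filter_upwards [hsmall ε hε] with n hn
      exact integrable_finsetSum _ fun k _ => (ha_int _ _ ⟨by linarith [hpos n], hn⟩).neg
    have hFnonneg : ∀ᶠ n in atTop, 0 ≤ ∫ ω, F n ω ∂P := by
      filter_upwards [hsmall ε hε] with n hn
      have hmem : (b - a) / ((n : ℝ) + 1) ∈ Set.Ioo (-ε) ε := ⟨by linarith [hpos n], hn⟩
      have hsum := integral_finsetSum (μ := P) (Finset.range (n + 2)) fun k _ =>
        (ha_int (a + (k + 1) * ((b - a) / ((n : ℝ) + 1))) _ hmem).neg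
      simp only [Pi.neg_apply] at hsum
      refine hsum.symm ▸ Finset.sum_nonneg fun k _ => ?_
      rw [integral_neg]
      exact neg_nonneg.2 (ha_opt _ _ hmem)
    have hlim : Tendsto (fun n => ∫ ω, F n ω ∂P) atTop
        (𝓝 (∫ ω, (M ⁻¹' Set.Icc a b).indicator W ω ∂P)) := by
      refine tendsto_integral_filter_of_dominated_convergence D
        (hFint.mono fun n h => h.aestronglyMeasurable) ?_ hD (Eventually.of_forall fun ω => ?_)
      · filter_upwards [hsmall ε' hε'] with n hn
        refine Eventually.of_forall fun ω => ?_
        rw [hF]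
        split_ifs with hc
        · have hg := next_grid_point_mem (M ω) a _ (hpos n) hc.1
          exact hbetween ω _ (hVmono (Y ω) (by linarith [hg.1]))
            (hVmono (Y ω) (by linarith [hg.2]))
        · rw [norm_zero]
          positivity
      · simp_rw [hF]
        convert tendsto_grid_sum _ (hVmono (Y ω)) (M ω) a b hab using 2
        simp only [Set.indicator_apply, Set.mem_preimage, hW]
    rw [← integral_indicator (hM measurableSet_Icc)]
    exact ge_of_tendsto hlim hFnonneg
  have hm : MeasurableSpace.comap M inferInstance ≤ ‹MeasurableSpace Ω› := hM.comap_le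
  obtain ⟨g, hgm, hg⟩ := (stronglyMeasurable_condExp (μ := P) (f := W)
    (m := MeasurableSpace.comap M inferInstance)).measurable.exists_eq_measurable_comp
  have hgint : Integrable g (P.map M) := by
    rw [integrable_map_measure hgm.aestronglyMeasurable hM.aemeasurable, ← hg]
    exact integrable_condExp
  have : IsProbabilityMeasure (P.map M) := Measure.isProbabilityMeasure_map hM.aemeasurable
  have hg0 := ae_nonneg_of_setIntegral_closedBall_nonneg (P.map M) g hgint fun x r hr => by
    rw [setIntegral_map Metric.isClosed_closedBall.measurableSet hgm.aestronglyMeasurable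
      hM.aemeasurable]
    have hcomp : (fun ω => g (M ω)) = P[W | MeasurableSpace.comap M inferInstance] := hg.symm
    rw [hcomp, setIntegral_condExp hm hWint
      ⟨_, Metric.isClosed_closedBall.measurableSet, rfl⟩, Real.closedBall_eq_Icc]
    exact hIcc _ _ (by linarith)
  filter_upwards [ae_of_ae_map hM.aemeasurable hg0] with ω hω
  rw [hg]
  exact hω
end

section
/- Let (Ω, F, P) be a probability space, let X be a random element of a measurable space 𝒳, let Y be a real-valued random variable, let V be an identification function, and let g : 𝒳 → ℝ be measurable. Assume that V(η, Y) is integrable for every η ∈ ℝ, that V(g(X), Y) and V(g(X)+, Y) are integrable, and that almost surely E[V(g(X), Y) | X] ≤ 0 and E[V(g(X)+, Y) | X] ≥ 0 (that is, g(X) is a version of the conditional functional value of Y given X). Then for every η ∈ ℝ and every measurable f : 𝒳 → ℝ, E[S_η(g(X), Y)] ≤ E[S_η(f(X), Y)], i.e., the conditionally correct predictor g(X) is optimal under every elementary loss among all predictors based on X. -/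
/-!
The two losses differ by `(𝟙{η ≤ f(X)} − 𝟙{η ≤ g(X)})·V(η, Y)`, so the excess loss of `f` over `g` is
`∫_A V(η, Y) − ∫_B V(η, Y)` with `A = {g(X) < η ≤ f(X)}` and `B = {f(X) < η ≤ g(X)}`. Both events are
`σ(X)`-measurable. On `A` monotonicity gives `V(η, Y) ≥ V(g(X)+, Y)`, whose integral over `A` is
nonnegative by the condition on `E[V(g(X)+, Y) | X]`; on `B` it gives `V(η, Y) ≤ V(g(X), Y)`, whose
integral over `B` is nonpositive by the condition on `E[V(g(X), Y) | X]`.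
-/

open MeasureTheory

/-- The elementary loss `S_η(z, y) = (𝟙{η ≤ z} − 𝟙{η ≤ y})·V(η, y)` associated
with an identification function `V`. -/
noncomputable def elementaryLoss (V : ℝ → ℝ → ℝ) (η z y : ℝ) : ℝ :=
  ((if η ≤ z then (1:ℝ) else 0) - (if η ≤ y then (1:ℝ) else 0)) * V η y

/-- **Inequality (1) of the paper for elementary losses.**
If `g(X)` is a version of the conditional functional value of `Y` given `X`,
i.e. `E[V(g(X), Y)|X] ≤ 0` and `E[V(g(X)+, Y)|X] ≥ 0` a.s., then `g(X)` is
optimal under every elementary loss `S_η` among all predictors `f(X)`. -/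
theorem correctly_specified_is_elementary_optimal
    {Ω : Type*} [MeasurableSpace Ω] (P : Measure Ω) [IsProbabilityMeasure P]
    {𝒳 : Type*} [MeasurableSpace 𝒳]
    (X : Ω → 𝒳) (hX : Measurable X)
    (Y : Ω → ℝ) (hY : Measurable Y)
    (V : ℝ → ℝ → ℝ)
    (hVmeas : Measurable (Function.uncurry V))
    (hVmono : ∀ y : ℝ, Monotone (fun z => V z y))
    (hVlc : ∀ y z : ℝ, ContinuousWithinAt (fun z => V z y) (Set.Iic z) z)
    (g : 𝒳 → ℝ) (hg : Measurable g)
    (hint_η : ∀ η : ℝ, Integrable (fun ω => V η (Y ω)) P)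
    (hint_g : Integrable (fun ω => V (g (X ω)) (Y ω)) P)
    (hint_g_plus : Integrable (fun ω => Function.rightLim (fun z => V z (Y ω)) (g (X ω))) P)
    (hcond_le : ∀ᵐ ω ∂P,
      (P[(fun ω => V (g (X ω)) (Y ω)) | MeasurableSpace.comap X inferInstance]) ω ≤ 0)
    (hcond_ge : ∀ᵐ ω ∂P,
      (P[(fun ω => Function.rightLim (fun z => V z (Y ω)) (g (X ω))) |
          MeasurableSpace.comap X inferInstance]) ω ≥ 0) :
    ∀ η : ℝ, ∀ f : 𝒳 → ℝ, Measurable f →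
      ∫ ω, elementaryLoss V η (g (X ω)) (Y ω) ∂P ≤
        ∫ ω, elementaryLoss V η (f (X ω)) (Y ω) ∂P := by
  intro η f hf
  have hm : MeasurableSpace.comap X inferInstance ≤ (inferInstance : MeasurableSpace Ω) :=
    hX.comap_le
  let A₀ : Set 𝒳 := {x | g x < η ∧ η ≤ f x}
  let B₀ : Set 𝒳 := {x | f x < η ∧ η ≤ g x}
  have hA₀ : MeasurableSet A₀ :=
    (measurableSet_lt hg measurable_const).inter (measurableSet_le measurable_const hf)
  have hB₀ : MeasurableSet B₀ :=
    (measurableSet_lt hf measurable_const).inter (measurableSet_le measurable_const hg)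
  have hA : MeasurableSet (X ⁻¹' A₀) := hX hA₀
  have hB : MeasurableSet (X ⁻¹' B₀) := hX hB₀
  have hA_nonneg : 0 ≤ ∫ ω in X ⁻¹' A₀, V η (Y ω) ∂P := by
    have h1 : 0 ≤ ∫ ω in X ⁻¹' A₀,
        Function.rightLim (fun z => V z (Y ω)) (g (X ω)) ∂P := by
      rw [← setIntegral_condExp hm hint_g_plus ⟨A₀, hA₀, rfl⟩]
      exact setIntegral_nonneg_of_ae hcond_ge
    refine h1.trans (setIntegral_mono_on hint_g_plus.integrableOn (hint_η η).integrableOn hA ?_)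
    intro ω hω
    exact (hVmono (Y ω)).rightLim_le hω.1
  have hB_nonpos : ∫ ω in X ⁻¹' B₀, V η (Y ω) ∂P ≤ 0 := by
    have h1 : ∫ ω in X ⁻¹' B₀, V (g (X ω)) (Y ω) ∂P ≤ 0 := by
      rw [← setIntegral_condExp hm hint_g ⟨B₀, hB₀, rfl⟩]
      exact setIntegral_nonpos_of_ae hcond_le
    refine le_trans (setIntegral_mono_on (hint_η η).integrableOn hint_g.integrableOn hB ?_) h1
    intro ω hω
    exact hVmono (Y ω) hω.2
  have hint_loss : ∀ h : 𝒳 → ℝ, Measurable h →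
      Integrable (fun ω => elementaryLoss V η (h (X ω)) (Y ω)) P := by
    intro h hh
    have h1 := (hint_η η).indicator (measurableSet_le measurable_const (hh.comp hX) :
      MeasurableSet {ω | η ≤ h (X ω)})
    have h2 := (hint_η η).indicator (measurableSet_le measurable_const hY :
      MeasurableSet {ω | η ≤ Y ω})
    refine (h1.sub h2).congr (Filter.Eventually.of_forall fun ω => ?_)
    simp only [Pi.sub_apply, Set.indicator_apply, Set.mem_ofPred_eq, elementaryLoss, sub_mul,
      ite_mul, one_mul, zero_mul]
  have hdiff : ∫ ω, elementaryLoss V η (f (X ω)) (Y ω) ∂P -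
      ∫ ω, elementaryLoss V η (g (X ω)) (Y ω) ∂P =
      ∫ ω in X ⁻¹' A₀, V η (Y ω) ∂P - ∫ ω in X ⁻¹' B₀, V η (Y ω) ∂P := by
    rw [← integral_sub (hint_loss f hf) (hint_loss g hg), ← integral_indicator hA,
      ← integral_indicator hB,
      ← integral_sub ((hint_η η).indicator hA) ((hint_η η).indicator hB)]
    refine integral_congr_ae (Filter.Eventually.of_forall fun ω => ?_)
    classical
    have hmA : ω ∈ X ⁻¹' A₀ ↔ ¬ η ≤ g (X ω) ∧ η ≤ f (X ω) := by rw [not_le]; rfl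
    have hmB : ω ∈ X ⁻¹' B₀ ↔ ¬ η ≤ f (X ω) ∧ η ≤ g (X ω) := by rw [not_le]; rfl
    simp only [Set.indicator_apply, hmA, hmB, elementaryLoss]
    by_cases h1 : η ≤ f (X ω) <;> by_cases h2 : η ≤ g (X ω) <;> simp only [h1, h2] <;> simp <;>
      split_ifs <;> ring
  linarith
end

section
/- Let φ : ℝ → ℝ be convex and differentiable, and define the Bregman loss L_φ(z, y) = φ(y) − φ(z) − φ'(z)(y − z) ≥ 0. Let (Ω, F, P) be a probability space, X a random element of a measurable space 𝒳, and Y an integrable real-valued random variable with φ(Y) integrable. Let μ be a version of E[Y | X] and let f : 𝒳 → ℝ be measurable such that L_φ(μ, Y) and L_φ(f(X), Y) are integrable. Then E[L_φ(μ, Y)] ≤ E[L_φ(f(X), Y)]. Moreover, if φ is strictly convex, then equality holds if and only if f(X) = μ almost surely. -/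
/-!
Write `m` for `E[Y | X]` and `g = f(X)`. The Bregman losses satisfy the three-point identity
`L(g, Y) - L(m, Y) = L(g, m) + (φ'(m) - φ'(g)) (Y - m)`.
The factor `φ'(m) - φ'(g)` is `σ(X)`-measurable and `Y - m` has conditional mean zero, so the
conditional expectation of the left side is `L(g, m)`. Hence the difference of the two risks is
`E[L(g, m)]`, which is nonnegative by convexity, and which for strictly convex `φ` vanishes only if
`g = m` almost surely.

The product `(φ'(m) - φ'(g)) (Y - m)` need not be known to be integrable a priori, so the usual
pull-out property does not apply directly; `condExp_add_mul_of_condExp_eq_zero` handles this by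
localizing to the `σ(X)`-measurable sets where `|φ'(m) - φ'(g)| ≤ n`.
-/

open MeasureTheory

/-- The Bregman loss `L_φ(z, y) = φ(y) − φ(z) − φ'(z)(y − z)` associated with a
convex differentiable function `φ`. -/
noncomputable def bregmanLoss (φ : ℝ → ℝ) (z y : ℝ) : ℝ :=
  φ y - φ z - deriv φ z * (y - z)

lemma bregmanLoss_nonneg {φ : ℝ → ℝ} (hφ : ConvexOn ℝ Set.univ φ) (hd : Differentiable ℝ φ)
    (z y : ℝ) : 0 ≤ bregmanLoss φ z y := by
  unfold bregmanLoss
  rcases lt_trichotomy z y with h | rfl | h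
  · have h1 := hφ.deriv_le_slope (Set.mem_univ z) (Set.mem_univ y) h (hd z)
    rw [slope_def_field, le_div_iff₀ (sub_pos.2 h)] at h1
    linarith
  · simp
  · have h1 := hφ.slope_le_deriv (Set.mem_univ y) (Set.mem_univ z) h (hd z)
    rw [slope_def_field, div_le_iff₀ (sub_pos.2 h)] at h1
    linarith

lemma eq_of_bregmanLoss_eq_zero {φ : ℝ → ℝ} (hφ : StrictConvexOn ℝ Set.univ φ)
    (hd : Differentiable ℝ φ) {z y : ℝ} (h0 : bregmanLoss φ z y = 0) : z = y := by
  unfold bregmanLoss at h0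
  rcases lt_trichotomy z y with h | h | h
  · have h1 := hφ.deriv_lt_slope (Set.mem_univ z) (Set.mem_univ y) h (hd z)
    rw [slope_def_field, lt_div_iff₀ (sub_pos.2 h)] at h1
    linarith
  · exact h
  · have h1 := hφ.slope_lt_deriv (Set.mem_univ y) (Set.mem_univ z) h (hd z)
    rw [slope_def_field, div_lt_iff₀ (sub_pos.2 h)] at h1
    linarith

/-- A pull-out property: only the sum `L + h * Z` is assumed integrable, not the two summands. -/
lemma condExp_add_mul_of_condExp_eq_zero {Ω : Type*} {m m0 : MeasurableSpace Ω} (hm : m ≤ m0)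
    {P : Measure Ω} [IsFiniteMeasure P] {L h Z : Ω → ℝ}
    (hL : StronglyMeasurable[m] L) (hh : StronglyMeasurable[m] h)
    (hZ : Integrable Z P) (hZ0 : P[Z | m] =ᵐ[P] 0) (hD : Integrable (L + h * Z) P) :
    P[L + h * Z | m] =ᵐ[P] L := by
  -- On the `m`-measurable set `{|h| ≤ n}` both summands become integrable.
  have key : ∀ n : ℕ, ∀ᵐ ω ∂P, |h ω| ≤ n → (P[L + h * Z | m]) ω = L ω := by
    intro n
    set A : Set Ω := {ω | |h ω| ≤ n} with hA
    have hAm : MeasurableSet[m] A :=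
      hh.norm.measurable measurableSet_Iic
    have hhA : StronglyMeasurable[m] (A.indicator h) := hh.indicator hAm
    have hb : ∀ ω, ‖A.indicator h ω‖ ≤ n := by
      intro ω
      by_cases hω : ω ∈ A
      · rw [Set.indicator_of_mem hω]; exact hω
      · rw [Set.indicator_of_notMem hω]; simp
    have hI : Integrable (A.indicator h * Z) P :=
      hZ.bdd_mul (hhA.mono hm).aestronglyMeasurable (Filter.Eventually.of_forall hb)
    have hdec : A.indicator (L + h * Z) = A.indicator L + A.indicator h * Z := by
      funext ω
      by_cases hω : ω ∈ A <;> simp [hω]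
    have hIL : Integrable (A.indicator L) P := by
      have := (hD.indicator (hm _ hAm)).sub hI
      rwa [hdec, add_sub_cancel_right] at this
    have h1 := condExp_indicator (m := m) hD hAm
    rw [hdec] at h1
    have h2 := condExp_add hIL hI m
    have h3 := condExp_mul_of_stronglyMeasurable_left hhA hI hZ
    rw [condExp_of_stronglyMeasurable hm (hL.indicator hAm) hIL] at h2
    filter_upwards [h1, h2, h3, hZ0] with ω e1 e2 e3 e4 hω
    have hω' : ω ∈ A := hω
    rw [e2, Pi.add_apply, e3, Pi.mul_apply, e4] at e1
    simpa [Set.indicator_of_mem hω'] using e1.symm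
  filter_upwards [ae_all_iff.2 key] with ω hω
  obtain ⟨n, hn⟩ := exists_nat_ge |h ω|
  exact hω n hn

/-- **The conditional mean minimizes every Bregman loss.**
If `μ` is a version of `E[Y | X]`, then for every measurable `f` (subject to
integrability), `E[L_φ(μ, Y)] ≤ E[L_φ(f(X), Y)]`; moreover, for strictly convex
`φ`, equality holds if and only if `f(X) = μ` almost surely. -/
theorem conditional_mean_minimizes_bregman_loss
    {Ω : Type*} [MeasurableSpace Ω] (P : Measure Ω) [IsProbabilityMeasure P]
    {𝒳 : Type*} [MeasurableSpace 𝒳]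
    (X : Ω → 𝒳) (hX : Measurable X)
    (Y : Ω → ℝ) (hY : Measurable Y) (hYint : Integrable Y P)
    (φ : ℝ → ℝ) (hφconv : ConvexOn ℝ Set.univ φ) (hφdiff : Differentiable ℝ φ)
    (hφY : Integrable (fun ω => φ (Y ω)) P)
    (μ : Ω → ℝ)
    (hμ : μ =ᵐ[P] P[Y | MeasurableSpace.comap X inferInstance])
    (f : 𝒳 → ℝ) (hf : Measurable f)
    (hintμ : Integrable (fun ω => bregmanLoss φ (μ ω) (Y ω)) P)
    (hintf : Integrable (fun ω => bregmanLoss φ (f (X ω)) (Y ω)) P) :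
    (∫ ω, bregmanLoss φ (μ ω) (Y ω) ∂P ≤ ∫ ω, bregmanLoss φ (f (X ω)) (Y ω) ∂P) ∧
    (StrictConvexOn ℝ Set.univ φ →
      ((∫ ω, bregmanLoss φ (μ ω) (Y ω) ∂P = ∫ ω, bregmanLoss φ (f (X ω)) (Y ω) ∂P) ↔
        (fun ω => f (X ω)) =ᵐ[P] μ)) := by
  set 𝓖 : MeasurableSpace Ω := MeasurableSpace.comap X inferInstance with h𝓖
  have hle : 𝓖 ≤ _ := hX.comap_le
  set m : Ω → ℝ := P[Y | 𝓖] with hm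
  have hmM : Measurable[𝓖] m := stronglyMeasurable_condExp.measurable
  have hgM : Measurable[𝓖] (fun ω => f (X ω)) := hf.comp (comap_measurable X)
  have hφM : Measurable φ := hφdiff.continuous.measurable
  have hφ'M : Measurable (deriv φ) := measurable_deriv φ
  set L : Ω → ℝ := fun ω => bregmanLoss φ (f (X ω)) (m ω) with hLdef
  set h : Ω → ℝ := fun ω => deriv φ (m ω) - deriv φ (f (X ω)) with hhdef
  have hLM : Measurable[𝓖] L :=
    ((hφM.comp hmM).sub (hφM.comp hgM)).sub ((hφ'M.comp hgM).mul (hmM.sub hgM))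
  have hhM : Measurable[𝓖] h := (hφ'M.comp hmM).sub (hφ'M.comp hgM)
  have hmI : Integrable m P := integrable_condExp
  have hZ : Integrable (Y - m) P := hYint.sub hmI
  have hZ0 : P[Y - m | 𝓖] =ᵐ[P] 0 := by
    have h1 := condExp_sub hYint hmI 𝓖
    rw [condExp_of_stronglyMeasurable hle stronglyMeasurable_condExp hmI] at h1
    simpa [hm] using h1
  -- The three-point identity for Bregman losses.
  have hdec : (fun ω => bregmanLoss φ (f (X ω)) (Y ω) - bregmanLoss φ (μ ω) (Y ω))
      =ᵐ[P] L + h * (Y - m) := by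
    filter_upwards [hμ] with ω hω
    simp only [hLdef, hhdef, bregmanLoss, Pi.add_apply, Pi.mul_apply, Pi.sub_apply, hω]
    ring
  have hDI : Integrable (L + h * (Y - m)) P := (hintf.sub hintμ).congr hdec
  have hcond := condExp_add_mul_of_condExp_eq_zero hle hLM.stronglyMeasurable
    hhM.stronglyMeasurable hZ hZ0 hDI
  have hLI : Integrable L P := integrable_condExp.congr hcond
  have hdiff : ∫ ω, bregmanLoss φ (f (X ω)) (Y ω) ∂P - ∫ ω, bregmanLoss φ (μ ω) (Y ω) ∂P
      = ∫ ω, L ω ∂P := by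
    rw [← integral_sub hintf hintμ, integral_congr_ae hdec, ← integral_condExp hle,
      integral_congr_ae hcond]
  have hL0 : 0 ≤ L := fun ω => bregmanLoss_nonneg hφconv hφdiff _ _
  refine ⟨?_, fun hs => ⟨fun heq => ?_, fun heq => ?_⟩⟩
  · have := integral_nonneg (μ := P) hL0
    linarith
  · have hz : ∫ ω, L ω ∂P = 0 := by rw [← hdiff, heq, sub_self]
    filter_upwards [(integral_eq_zero_iff_of_nonneg hL0 hLI).1 hz, hμ] with ω h1 h2
    rw [h2]
    exact eq_of_bregmanLoss_eq_zero hs hφdiff h1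
  · refine integral_congr_ae ?_
    filter_upwards [heq] with ω hω
    rw [hω]
end

section
/- Let (Ω, F, P) be a probability space with a filtration (A_n)_{n ∈ ℕ}, let Y be a real-valued random variable, let V be an identification function, and let (Z_n)_{n ∈ ℕ} be a sequence of real-valued random variables such that Z_n is A_n-measurable, Z_n ≤ Z_{n+1} almost surely for all n, and V(Z_n, Y) is integrable for all n. Then the sequence Z̄_n := E[V(Z_n, Y) | A_n] is a submartingale with respect to (A_n): for every n, E[Z̄_{n+1} | A_n] ≥ Z̄_n almost surely. -/
open MeasureTheory

/-- **Submartingale property in the proof of Theorem 1.**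
If `Z n` is `A n`-measurable, a.s. increasing in `n`, and `V(Z n, Y)` is
integrable, then `Z̄ n := E[V(Z n, Y) | A n]` satisfies the submartingale
inequality `E[Z̄ (n+1) | A n] ≥ Z̄ n` a.s. for every `n`. -/
theorem condexp_identification_submartingale
    {Ω : Type*} [m : MeasurableSpace Ω] (P : Measure Ω) [IsProbabilityMeasure P]
    (A : ℕ → MeasurableSpace Ω) (hA_le : ∀ n, A n ≤ m) (hA_mono : Monotone A)
    (Y : Ω → ℝ) (hY : Measurable Y)
    (V : ℝ → ℝ → ℝ)
    (hVmeas : Measurable (Function.uncurry V))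
    (hVmono : ∀ y : ℝ, Monotone (fun z => V z y))
    (hVlc : ∀ y z : ℝ, ContinuousWithinAt (fun z => V z y) (Set.Iic z) z)
    (Z : ℕ → Ω → ℝ)
    (hZmeas : ∀ n, Measurable[A n] (Z n))
    (hZmono : ∀ n, ∀ᵐ ω ∂P, Z n ω ≤ Z (n + 1) ω)
    (hZint : ∀ n, Integrable (fun ω => V (Z n ω) (Y ω)) P) :
    ∀ n, ∀ᵐ ω ∂P,
      (P[(P[(fun ω => V (Z (n + 1) ω) (Y ω)) | A (n + 1)]) | A n]) ω ≥
        (P[(fun ω => V (Z n ω) (Y ω)) | A n]) ω := by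
  intro n
  -- Monotonicity of `V` in its first argument passes to conditional expectations given `A n`.
  have hmono := condExp_mono (m := A n) (hZint n) (hZint (n + 1))
    ((hZmono n).mono fun ω hω => hVmono (Y ω) hω)
  -- The tower property removes the inner conditioning on the finer `A (n + 1)`.
  have htower := condExp_condExp_of_le (μ := P) (f := fun ω => V (Z (n + 1) ω) (Y ω))
    (hA_mono n.le_succ) (hA_le (n + 1))
  filter_upwards [hmono, htower] with ω h₁ h₂
  exact h₁.trans h₂.ge
end

section
/- Let φ(x) = (2π)^{−1/2} exp(−x²/2) denote the standard normal density. For every η < 0, the function b ↦ ∫_{η/b}^{∞} (η − x²) φ(x) dx is strictly increasing on (0, ∞). -/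
/-!
The integrand `(η - x²) φ(x)` is everywhere negative and integrable. As `b` grows over `(0, ∞)` the
lower limit `η / b` strictly increases (because `η < 0`), so the integral loses a strictly negative
contribution over `(η / b₁, η / b₂]`.
-/

open MeasureTheory Real

/-- The standard normal density `φ(x) = (2π)^{-1/2} exp(-x²/2)`. -/
noncomputable def stdNormalPdf (x : ℝ) : ℝ :=
  (Real.sqrt (2 * Real.pi))⁻¹ * Real.exp (-x ^ 2 / 2)

lemma integrable_sub_sq_mul_stdNormalPdf (η : ℝ) :
    Integrable (fun x : ℝ => (η - x ^ 2) * stdNormalPdf x) := by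
  have h0 := integrable_exp_neg_mul_sq (b := 1 / 2) (by norm_num)
  have h2 := integrable_rpow_mul_exp_neg_mul_sq (b := 1 / 2) (by norm_num) (s := 2) (by norm_num)
  refine (((h0.const_mul η).sub h2).const_mul (Real.sqrt (2 * Real.pi))⁻¹).congr
    (ae_of_all _ fun x => ?_)
  have he : -(1 / 2) * x ^ 2 = -x ^ 2 / 2 := by ring
  simp only [Pi.sub_apply, stdNormalPdf, he, Real.rpow_ofNat]
  ring

/-- **Monotonicity of the expected elementary loss for `η < 0`.**
For every `η < 0`, the function `b ↦ ∫_{η/b}^∞ (η − x²) φ(x) dx` is strictly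
increasing on `(0, ∞)`. -/
theorem strictMonoOn_integral_Ioi_div (η : ℝ) (hη : η < 0) :
    StrictMonoOn (fun b : ℝ => ∫ x in Set.Ioi (η / b), (η - x ^ 2) * stdNormalPdf x)
      (Set.Ioi (0 : ℝ)) := by
  intro b₁ hb₁ b₂ hb₂ hb
  simp only [Set.mem_Ioi] at hb₁ hb₂
  have hlt : η / b₁ < η / b₂ := by
    rw [div_lt_div_iff₀ hb₁ hb₂]
    exact mul_lt_mul_of_neg_left hb hη
  have hint := integrable_sub_sq_mul_stdNormalPdf η
  have hsub := intervalIntegral.integral_Ioi_sub_Ioi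
    (hint.integrableOn (s := Set.Ioi (η / b₁))) hlt.le
  have hpos : 0 < ∫ x in (η / b₁)..(η / b₂), -((η - x ^ 2) * stdNormalPdf x) := by
    refine intervalIntegral.intervalIntegral_pos_of_pos
      hint.neg.intervalIntegrable (fun x => ?_) hlt
    have hφ : 0 < stdNormalPdf x := by unfold stdNormalPdf; positivity
    exact neg_pos.mpr (mul_neg_of_neg_of_pos (by nlinarith [sq_nonneg x]) hφ)
  rw [intervalIntegral.integral_neg] at hpos
  show (∫ x in Set.Ioi (η / b₁), (η - x ^ 2) * stdNormalPdf x) <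
    ∫ x in Set.Ioi (η / b₂), (η - x ^ 2) * stdNormalPdf x
  linarith
end
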